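/- Theorem 3: For the quaternary sequence u₅ = φ[s₁, s₂+1] of period p, the 4-adic complexity satisfies Φ₄(u₅) ≥ ⌊log₄((4^p − 1)/((1+2p)(1+6p)(1+8p)) + 1)⌋. -/

import Mathlib

open Finset

/-- The cyclotomic class `D_i` of order 4 modulo `p` with respect to the
primitive root `θ`: `{θ^(i+4j) mod p : 0 ≤ j < (p-1)/4}`. -/
def cycD (p θ i : ℕ) : Finset ℕ :=
  (Finset.range ((p - 1) / 4)).image fun j => θ ^ (i + 4 * j) % p

/-- The binary sequence `s₁` with support set `D₀ ∪ D₁`. -/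
def seqS1 (p θ : ℕ) (t : ℕ) : ℕ := if t ∈ cycD p θ 0 ∪ cycD p θ 1 then 1 else 0

/-- The binary sequence `s₂` with support set `D₀ ∪ D₃`. -/
def seqS2 (p θ : ℕ) (t : ℕ) : ℕ := if t ∈ cycD p θ 0 ∪ cycD p θ 3 then 1 else 0

/-- The binary sequence `s₃` with support set `D₁ ∪ D₂`. -/
def seqS3 (p θ : ℕ) (t : ℕ) : ℕ := if t ∈ cycD p θ 1 ∪ cycD p θ 2 then 1 else 0

/-- The binary sequence `s₄` with support set `D₂ ∪ D₃`. -/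
def seqS4 (p θ : ℕ) (t : ℕ) : ℕ := if t ∈ cycD p θ 2 ∪ cycD p θ 3 then 1 else 0

/-- The bitwise complement `s + 1` of a binary sequence. -/
def seqCompl (s : ℕ → ℕ) (t : ℕ) : ℕ := 1 - s t

/-- The inverse Gray mapping: `φ[0,0]=0, φ[0,1]=1, φ[1,1]=2, φ[1,0]=3`. -/
def gray (a b : ℕ) : ℕ := if a = 0 then b else 3 - b

/-- The quaternary sequence `φ[r,s] : t ↦ φ[r(t), s(t)]`. -/
def graySeq (r s : ℕ → ℕ) (t : ℕ) : ℕ := gray (r t) (s t)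

/-- The generating value `U(4) = Σ_{t=0}^{p-1} u(t)·4^t` of a quaternary
sequence `u` of period `p`. -/
def seqVal (p : ℕ) (u : ℕ → ℕ) : ℕ := ∑ t ∈ Finset.range p, u t * 4 ^ t

/-- The 4-adic complexity `Φ₄(u) = ⌊log₄((4^p − 1)/gcd(4^p − 1, U(4)) + 1)⌋`
of a quaternary sequence `u` of period `p`. -/
noncomputable def adicComplexity4 (p : ℕ) (u : ℕ → ℕ) : ℤ :=
  ⌊Real.logb 4 (((4 ^ p - 1 : ℕ) : ℝ) / ((Nat.gcd (4 ^ p - 1) (seqVal p u) : ℕ) : ℝ) + 1)⌋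

/-!
Let `d = gcd (4 ^ p - 1) (U 4)`. Since `3` does not divide `U 4`, the element `4 - 1` is a unit
modulo `d`, so the additive character `ψ t = 4 ^ t` of `ℤ/p` with values in `ℤ/d` sums to `0`. For
`f : ℤ/p → ℤ` put `f̂ = ∑ t, f t * ψ t`. Up to a correction at `0`, the sequence satisfies
`2 u = 3 + χ + 2 ε`, where `χ` is the quadratic character and `ε` is `1` on `D₀ ∪ D₁` and `-1`
on `D₂ ∪ D₃`; since `d ∣ U 4`, this gives `χ̂ + 2 ε̂ = 1`.

The convolution `ε * ε` is invariant under multiplication by nonzero squares, so off `0` it is a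
combination of `1` and `χ`; its value at `0` and its vanishing total mass determine the coefficient
of `1`. This yields `ε̂ ^ 2 = σ p + m χ̂` with `σ = χ i = ±1`, where `i ^ 2 = -1`, and
`|m| ≤ p + 1`. As `χ̂ ^ 2 = p`, eliminating `ε̂` and then `χ̂` shows that `d` divides
`(1 + p - 4 σ p) ^ 2 - p (2 + 4 m) ^ 2`, which is nonzero because it is congruent to `1` modulo
`p`; hence `d` is at most its absolute value.
-/

section Convolution

variable {G R : Type*} [AddCommGroup G] [Fintype G] [CommRing R]

/-- The convolution of two integer-valued functions on a finite abelian group, as a finite sum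
rather than the topological sum of `DiscreteConvolution.addConvolution`. -/
def addConv (f g : G → ℤ) (k : G) : ℤ := ∑ t, f t * g (k - t)

/-- The value at the character `ψ` of the Fourier transform of `f`. The character takes values in
an arbitrary commutative ring, since it is applied to `ℤ/d` with `d` composite. -/
def charSum (ψ : AddChar G R) (f : G → ℤ) : R := ∑ t, (f t : R) * ψ t

lemma charSum_addConv (ψ : AddChar G R) (f g : G → ℤ) :
    charSum ψ (addConv f g) = charSum ψ f * charSum ψ g := by
  have shift (t : G) : ∑ k, (f t : R) * g (k - t) * ψ k = f t * ψ t * ∑ s, g s * ψ s := by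
    rw [mul_sum, ← Equiv.sum_comp (Equiv.addLeft t)]
    refine sum_congr rfl fun s _ => ?_
    rw [Equiv.coe_addLeft, add_sub_cancel_left, AddChar.map_add_eq_mul]
    ring
  simp only [charSum, addConv, Int.cast_sum, Int.cast_mul, sum_mul]
  rw [sum_comm]
  exact sum_congr rfl fun t _ => shift t

lemma charSum_one (f : G → ℤ) : charSum (1 : AddChar G R) f = (∑ t, f t : ℤ) := by
  simp [charSum]

lemma sum_addConv (f g : G → ℤ) : ∑ k, addConv f g k = (∑ t, f t) * ∑ t, g t := by
  simpa [charSum_one] using charSum_addConv (1 : AddChar G ℤ) f g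

lemma abs_addConv_le {f g : G → ℤ} (hf : ∀ t, |f t| ≤ 1) (hg : ∀ t, |g t| ≤ 1) (k : G) :
    |addConv f g k| ≤ Fintype.card G :=
  calc |addConv f g k| ≤ ∑ t, |f t * g (k - t)| := abs_sum_le_sum_abs _ _
    _ ≤ ∑ _t : G, 1 := sum_le_sum fun t _ => by
        rw [abs_mul]; exact mul_le_one₀ (hf t) (abs_nonneg _) (hg _)
    _ = Fintype.card G := by simp

end Convolution

section FiniteField

variable {F : Type*} [Field F] [Fintype F]

lemma sum_eq_zero_of_dilation {f : F → ℤ} {a : F} (ha : a ≠ 0) (hf : ∀ t, f (a * t) = -f t) :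
    ∑ t, f t = 0 := by
  have h : ∑ t, f (a * t) = ∑ t, f t := Equiv.sum_comp (Equiv.mulLeft₀ a ha) f
  simp only [hf, sum_neg_distrib] at h
  omega

lemma addConv_dilation {f g : F → ℤ} {a : F} {c d : ℤ} (ha : a ≠ 0)
    (hf : ∀ t, f (a * t) = c * f t) (hg : ∀ t, g (a * t) = d * g t) (k : F) :
    addConv f g (a * k) = c * d * addConv f g k := by
  unfold addConv
  rw [← Equiv.sum_comp (Equiv.mulLeft₀ a ha), mul_sum]
  refine sum_congr rfl fun t _ => ?_
  rw [Equiv.mulLeft₀_apply, ← mul_sub, hf, hg]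
  ring

variable [DecidableEq F]

local notation "χ" => quadraticChar F

local notation "q" => Fintype.card F

lemma sum_quadraticChar_sq : ∑ t : F, χ t ^ 2 = q - 1 := by
  have h (t : F) : χ t ^ 2 = 1 - if t = 0 then 1 else 0 := by
    split_ifs with ht
    · simp [ht]
    · rw [quadraticChar_sq_one ht, sub_zero]
  simp only [h, sum_sub_distrib, sum_ite_eq', mem_univ, if_true, sum_const, card_univ,
    nsmul_eq_mul, mul_one]

lemma addConv_quadraticChar (hF : ringChar F ≠ 2) (k : F) :
    addConv χ χ k = χ (-1) * (q * (if k = 0 then 1 else 0) - 1) := by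
  by_cases hk : k = 0
  · have h (t : F) : χ t * χ (0 - t) = χ (-1) * χ t ^ 2 := by
      rw [zero_sub, ← neg_one_mul, map_mul]; ring
    simp only [addConv, hk, h, ← mul_sum, sum_quadraticChar_sq, if_true, mul_one]
  · have jacobi : addConv χ χ 1 = -χ (-1) := by
      rw [← jacobiSum_nontrivial_inv (quadraticChar_ne_one hF), (quadraticChar_isQuadratic F).inv]
      rfl
    have dilate := addConv_dilation hk (map_mul χ k) (map_mul χ k) 1
    rw [mul_one, ← sq, quadraticChar_sq_one hk, one_mul, jacobi] at dilate
    simp [dilate, hk]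

lemma charSum_quadraticChar_sq {R : Type*} [CommRing R] {ψ : AddChar F R} (hF : ringChar F ≠ 2)
    (hψ : ∑ t, ψ t = 0) : charSum ψ χ ^ 2 = (χ (-1) * q : ℤ) := by
  rw [sq, ← charSum_addConv, charSum]
  simp [addConv_quadraticChar hF, mul_sub, sub_mul, sum_sub_distrib, ← mul_sum, hψ]

lemma eq_of_sq_invariant {g : F → ℤ} (hg : ∀ a k, a ≠ 0 → g (a ^ 2 * k) = g k) {b k : F}
    (hb : b ≠ 0) (hk : k ≠ 0) (h : χ k = χ b) : g k = g b := by
  have hquot : χ (k / b) = 1 := by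
    have hmul : χ (k / b) * χ b = 1 * χ b := by
      rw [← map_mul, div_mul_cancel₀ k hb, one_mul, h]
    exact mul_right_cancel₀ (quadraticChar_eq_zero_iff.not.mpr hb) hmul
  obtain ⟨c, hc⟩ := (quadraticChar_one_iff_isSquare (div_ne_zero hk hb)).mp hquot
  have hc0 : c ≠ 0 := by
    rintro rfl
    exact div_ne_zero hk hb (hc.trans (mul_zero 0))
  rw [← hg c b hc0, sq, ← hc, div_mul_cancel₀ k hb]

lemma eq_of_sq_invariant_of_sum_eq_zero {g : F → ℤ} (hF : ringChar F ≠ 2)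
    (hg : ∀ a k, a ≠ 0 → g (a ^ 2 * k) = g k) (hsum : ∑ k, g k = 0) {c : ℤ}
    (hzero : g 0 = c * (q - 1)) (k : F) :
    g k = c * (q * (if k = 0 then 1 else 0) - 1) + (g 1 + c) * χ k := by
  obtain ⟨b, hb⟩ := quadraticChar_exists_neg_one hF
  have hb0 : b ≠ 0 := by rintro rfl; simp at hb
  have two_mul_eq (k : F) : 2 * g k = (g 1 + g b) + (g 1 - g b) * χ k
      + (2 * c * (q - 1) - (g 1 + g b)) * (if k = 0 then 1 else 0) := by
    by_cases hk : k = 0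
    · simp only [hk, hzero, quadraticChar_zero, if_true]; ring
    · rcases quadraticChar_dichotomy hk with h | h
      · rw [eq_of_sq_invariant hg one_ne_zero hk (h.trans (map_one χ).symm), h, if_neg hk]; ring
      · rw [eq_of_sq_invariant hg hb0 hk (h.trans hb.symm), h, if_neg hk]; ring
  have hcard : (q : ℤ) - 1 ≠ 0 := by
    have := Fintype.one_lt_card (α := F)
    omega
  have hvalues : g 1 + g b = -2 * c := by
    have htotal : ∑ k, 2 * g k = 0 := by rw [← mul_sum, hsum, mul_zero]
    simp only [two_mul_eq, sum_add_distrib, ← mul_sum, quadraticChar_sum_zero hF, sum_const,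
      card_univ, nsmul_eq_mul, sum_ite_eq', mem_univ, if_true] at htotal
    exact mul_left_cancel₀ hcard (by linear_combination htotal)
  have hk := two_mul_eq k
  rw [show g b = -2 * c - g 1 by linear_combination hvalues] at hk
  linarith

variable (F) in
/-- A function on a finite field that is `±1` off `0`, vanishes at `0`, and changes under
multiplication by squares as `χ` does under multiplication by their roots. When `4 ∣ q - 1` these
are the functions that are constant on the cyclotomic classes of order 4 and take opposite values
`±1` on `D i` and `D (i + 2)`. -/
structure IsQuarticSign (ε : F → ℤ) : Prop where
  sq_eq : ∀ t, ε t ^ 2 = χ t ^ 2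
  map_sq_mul : ∀ a t, ε (a ^ 2 * t) = χ a * ε t

namespace IsQuarticSign

variable {ε : F → ℤ} (hε : IsQuarticSign F ε)

include hε

lemma abs_le_one (t : F) : |ε t| ≤ 1 := by
  rw [← sq_le_one_iff_abs_le_one, hε.sq_eq]
  rcases quadraticChar_isQuadratic F t with h | h | h <;> simp only [h] <;> norm_num

lemma map_neg {i : F} (hi : i ^ 2 = -1) (t : F) : ε (-t) = χ i * ε t := by
  rw [← hε.map_sq_mul, hi, neg_one_mul]

lemma sum_eq_zero (hF : ringChar F ≠ 2) : ∑ t, ε t = 0 := by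
  obtain ⟨b, hb⟩ := quadraticChar_exists_neg_one hF
  have hb0 : b ≠ 0 := by rintro rfl; simp at hb
  exact sum_eq_zero_of_dilation (pow_ne_zero 2 hb0) fun t => by
    rw [hε.map_sq_mul, hb, neg_one_mul]

lemma addConv_self_zero {i : F} (hi : i ^ 2 = -1) : addConv ε ε 0 = χ i * (q - 1) := by
  have h (t : F) : ε t * ε (0 - t) = χ i * χ t ^ 2 := by
    rw [zero_sub, hε.map_neg hi, ← hε.sq_eq]; ring
  simp only [addConv, h, ← mul_sum, sum_quadraticChar_sq]

lemma addConv_self_sq_mul (a k : F) (ha : a ≠ 0) :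
    addConv ε ε (a ^ 2 * k) = addConv ε ε k := by
  rw [addConv_dilation (pow_ne_zero 2 ha) (hε.map_sq_mul a) (hε.map_sq_mul a), ← sq,
    quadraticChar_sq_one ha, one_mul]

lemma addConv_self (hF : ringChar F ≠ 2) {i : F} (hi : i ^ 2 = -1) (k : F) :
    addConv ε ε k =
      χ i * (q * (if k = 0 then 1 else 0) - 1) + (addConv ε ε 1 + χ i) * χ k :=
  eq_of_sq_invariant_of_sum_eq_zero hF hε.addConv_self_sq_mul
    (by rw [sum_addConv, hε.sum_eq_zero hF, mul_zero]) (hε.addConv_self_zero hi) k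

lemma charSum_sq {R : Type*} [CommRing R] {ψ : AddChar F R} (hF : ringChar F ≠ 2)
    (hψ : ∑ t, ψ t = 0) {i : F} (hi : i ^ 2 = -1) :
    charSum ψ ε ^ 2 = (χ i * q : ℤ) + (addConv ε ε 1 + χ i : ℤ) * charSum ψ χ := by
  have h := hε.addConv_self hF hi
  generalize addConv ε ε 1 + χ i = m at h ⊢
  rw [sq, ← charSum_addConv]
  simp [charSum, h, mul_sub, add_mul, sub_mul, sum_add_distrib, sum_sub_distrib, mul_assoc,
    ← mul_sum, hψ]

end IsQuarticSign

end FiniteField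

section Eliminant

/-- The integer obtained by eliminating `b` and then `s` from the equations `s + 2 b = 1`,
`b ^ 2 = σ q + m s` and `s ^ 2 = q`. -/
def eliminant (q σ m : ℤ) : ℤ := (1 + q - 4 * σ * q) ^ 2 - q * (2 + 4 * m) ^ 2

variable {q σ m : ℤ}

lemma intCast_eliminant_eq_zero {R : Type*} [CommRing R] {s b : R} (hs : s ^ 2 = q)
    (hb : b ^ 2 = σ * q + m * s) (hsb : s + 2 * b = 1) : (eliminant q σ m : R) = 0 := by
  have linear_in_s : (1 + q - 4 * σ * q : R) = s * (2 + 4 * m) := by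
    have hsq : (2 * b) ^ 2 = (1 - s) ^ 2 := by rw [eq_sub_of_add_eq' hsb]
    linear_combination 4 * hb - hsq - hs
  simp only [eliminant, Int.cast_sub, Int.cast_mul, Int.cast_add, Int.cast_pow, Int.cast_one,
    Int.cast_ofNat, linear_in_s]
  linear_combination (2 + 4 * (m : R)) ^ 2 * hs

lemma eliminant_ne_zero (hq : 1 < q) : eliminant q σ m ≠ 0 := by
  intro h
  have hdvd : q ∣ 1 :=
    ⟨(2 + 4 * m) ^ 2 - 2 * (1 - 4 * σ) - q * (1 - 4 * σ) ^ 2, by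
      unfold eliminant at h; linear_combination h⟩
  exact absurd (Int.le_of_dvd one_pos hdvd) (not_le.mpr hq)

lemma abs_eliminant_le (hq : 1 ≤ q) (hσ : |σ| ≤ 1) (hm : |m| ≤ q + 1) :
    |eliminant q σ m| ≤ (1 + 2 * q) * (1 + 6 * q) * (1 + 8 * q) := by
  rw [abs_le] at hσ hm
  have hfst : (1 + q - 4 * σ * q) ^ 2 ≤ (1 + 5 * q) ^ 2 :=
    sq_le_sq' (by nlinarith) (by nlinarith)
  have hsnd : q * (2 + 4 * m) ^ 2 ≤ q * (4 * q + 6) ^ 2 :=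
    mul_le_mul_of_nonneg_left (sq_le_sq' (by linarith) (by linarith)) (by linarith)
  have hnonneg : 0 ≤ q * (2 + 4 * m) ^ 2 := mul_nonneg (by linarith) (sq_nonneg _)
  rw [eliminant, abs_le]
  constructor <;> nlinarith [sq_nonneg (1 + q - 4 * σ * q), pow_pos (show 0 < q by linarith) 3]

end Eliminant

section CyclotomicClasses

/-- The function `s₁ - s₄` on `ℤ/p`, which is `1` on `D₀ ∪ D₁`, `-1` on `D₂ ∪ D₃` and `0` at `0`. -/
def quarticSign (p θ : ℕ) (t : ZMod p) : ℤ := (seqS1 p θ t.val : ℤ) - seqS4 p θ t.val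

/-- The quaternary sequence `u₅ = φ[s₁, s₂ + 1]`. -/
def seqU5 (p θ : ℕ) : ℕ → ℕ := graySeq (seqS1 p θ) (seqCompl (seqS2 p θ))

variable {p θ : ℕ} [Fact p.Prime]

lemma exists_pow_eq_of_ne_zero (hθ : IsPrimitiveRoot (θ : ZMod p) (p - 1)) {t : ZMod p}
    (ht : t ≠ 0) : ∃ n, (θ : ZMod p) ^ n = t := by
  have : NeZero (p - 1) := ⟨Nat.sub_ne_zero_of_lt (Fact.out : p.Prime).one_lt⟩
  obtain ⟨n, -, hn⟩ := hθ.eq_pow_of_pow_eq_one (ZMod.pow_card_sub_one_eq_one ht)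
  exact ⟨n, hn⟩

lemma primitiveRoot_ne_zero (hθ : IsPrimitiveRoot (θ : ZMod p) (p - 1)) : (θ : ZMod p) ≠ 0 :=
  hθ.ne_zero (Nat.sub_ne_zero_of_lt (Fact.out : p.Prime).one_lt)

lemma pow_mod_eq_val_pow_iff (hθ : IsPrimitiveRoot (θ : ZMod p) (p - 1)) {m n : ℕ} :
    θ ^ m % p = ((θ : ZMod p) ^ n).val ↔ m ≡ n [MOD p - 1] := by
  have hp1 : p - 1 ≠ 0 := Nat.sub_ne_zero_of_lt (Fact.out : p.Prime).one_lt
  rw [← ZMod.val_natCast, (ZMod.val_injective p).eq_iff, Nat.cast_pow,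
    (hθ.isOfFinOrder hp1).pow_eq_pow_iff_modEq, ← hθ.eq_orderOf]

lemma zero_notMem_cycD (hθ : IsPrimitiveRoot (θ : ZMod p) (p - 1)) (i : ℕ) : 0 ∉ cycD p θ i := by
  simp only [cycD, mem_image, not_exists, not_and]
  intro j _ h
  refine pow_ne_zero (i + 4 * j) (primitiveRoot_ne_zero hθ) ?_
  exact_mod_cast (ZMod.natCast_eq_zero_iff _ _).mpr (Nat.dvd_of_mod_eq_zero h)

lemma quarticSign_zero (hθ : IsPrimitiveRoot (θ : ZMod p) (p - 1)) : quarticSign p θ 0 = 0 := by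
  simp [quarticSign, seqS1, seqS4, zero_notMem_cycD hθ]

variable (hp4 : p % 4 = 1) (hθ : IsPrimitiveRoot (θ : ZMod p) (p - 1))

include hp4 hθ

lemma val_pow_mem_cycD_iff {i : ℕ} (hi : i < 4) (n : ℕ) :
    ((θ : ZMod p) ^ n).val ∈ cycD p θ i ↔ n % 4 = i := by
  have h4 : 4 ∣ p - 1 := by omega
  have hp1 : 0 < p - 1 := Nat.sub_pos_of_lt (Fact.out : p.Prime).one_lt
  simp only [cycD, mem_image, mem_range, pow_mod_eq_val_pow_iff hθ]
  constructor
  · rintro ⟨j, -, hj⟩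
    have := hj.of_dvd h4
    unfold Nat.ModEq at this
    omega
  · intro hn
    have hlt := Nat.mod_lt n hp1
    have hmod : n % (p - 1) % 4 = n % 4 := Nat.mod_mod_of_dvd n h4
    refine ⟨n % (p - 1) / 4, by omega, ?_⟩
    rw [show i + 4 * (n % (p - 1) / 4) = n % (p - 1) by omega]
    exact Nat.mod_modEq n (p - 1)

lemma quadraticChar_primitiveRoot : quadraticChar (ZMod p) θ = -1 := by
  have hp1 : 1 < p := (Fact.out : p.Prime).one_lt
  rw [quadraticChar_neg_one_iff_not_isSquare, ZMod.euler_criterion p (primitiveRoot_ne_zero hθ)]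
  exact hθ.pow_ne_one_of_pos_of_lt (by omega) (by omega)

lemma quadraticChar_primitiveRoot_pow (n : ℕ) :
    quadraticChar (ZMod p) ((θ : ZMod p) ^ n) = (-1) ^ n := by
  rw [map_pow, quadraticChar_primitiveRoot hp4 hθ]

lemma quarticSign_pow (n : ℕ) :
    quarticSign p θ ((θ : ZMod p) ^ n) = if n % 4 < 2 then 1 else -1 := by
  have hn : n % 4 < 4 := Nat.mod_lt n (by norm_num)
  simp only [quarticSign, seqS1, seqS4, mem_union, val_pow_mem_cycD_iff hp4 hθ, Nat.ofNat_pos,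
    Nat.one_lt_ofNat, Nat.reduceLT, Nat.lt_add_one]
  split_ifs <;> omega

lemma isQuarticSign_quarticSign : IsQuarticSign (ZMod p) (quarticSign p θ) where
  sq_eq t := by
    rcases eq_or_ne t 0 with rfl | ht
    · rw [quarticSign_zero hθ, quadraticChar_zero]
    · obtain ⟨n, rfl⟩ := exists_pow_eq_of_ne_zero hθ ht
      rw [quarticSign_pow hp4 hθ, quadraticChar_sq_one ht]
      split_ifs <;> rfl
  map_sq_mul a t := by
    rcases eq_or_ne a 0 with rfl | ha
    · simp [quarticSign_zero hθ]
    rcases eq_or_ne t 0 with rfl | ht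
    · simp [quarticSign_zero hθ]
    obtain ⟨m, rfl⟩ := exists_pow_eq_of_ne_zero hθ ha
    obtain ⟨n, rfl⟩ := exists_pow_eq_of_ne_zero hθ ht
    rw [← pow_mul, ← pow_add, quarticSign_pow hp4 hθ, quarticSign_pow hp4 hθ,
      quadraticChar_primitiveRoot_pow hp4 hθ]
    rcases m.even_or_odd with hm | hm
    · rw [hm.neg_one_pow, one_mul, show (m * 2 + n) % 4 = n % 4 by grind]
    · rw [hm.neg_one_pow, show (m * 2 + n) % 4 = (n + 2) % 4 by grind]
      split_ifs <;> omega

lemma two_mul_seqU5 (t : ZMod p) :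
    2 * (seqU5 p θ t.val : ℤ) =
      3 - (if t = 0 then 1 else 0) + quadraticChar (ZMod p) t + 2 * quarticSign p θ t := by
  rcases eq_or_ne t 0 with rfl | ht
  · simp [seqU5, graySeq, gray, seqS1, seqS2, seqCompl, zero_notMem_cycD hθ, quarticSign_zero hθ]
  · obtain ⟨n, rfl⟩ := exists_pow_eq_of_ne_zero hθ ht
    rw [quadraticChar_primitiveRoot_pow hp4 hθ, quarticSign_pow hp4 hθ, neg_one_pow_eq_ite,
      if_neg ht]
    simp only [seqU5, graySeq, gray, seqS1, seqS2, seqCompl, mem_union,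
      val_pow_mem_cycD_iff hp4 hθ, Nat.ofNat_pos, Nat.one_lt_ofNat, Nat.lt_add_one]
    grind

lemma two_mul_charSum_seqU5 {R : Type*} [CommRing R] (ψ : AddChar (ZMod p) R) :
    2 * charSum ψ (fun t => (seqU5 p θ t.val : ℤ)) =
      3 * ∑ t, ψ t - 1 + charSum ψ (quadraticChar (ZMod p)) + 2 * charSum ψ (quarticSign p θ) := by
  have h (t : ZMod p) : 2 * ((seqU5 p θ t.val : ℤ) * ψ t : R) =
      3 * ψ t - (if t = 0 then 1 else 0) * ψ t + (quadraticChar (ZMod p) t : R) * ψ t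
        + 2 * ((quarticSign p θ t : R) * ψ t) := by
    have := congrArg (Int.cast : ℤ → R) (two_mul_seqU5 hp4 hθ t)
    push_cast at this ⊢
    linear_combination ψ t * this
  simp only [charSum, mul_sum, h, sum_add_distrib, sum_sub_distrib]
  simp

end CyclotomicClasses

section AdicComplexity

lemma floor_logb_le_adicComplexity4 {p : ℕ} {u : ℕ → ℕ} {B : ℝ} (hp : p ≠ 0)
    (hB : (Nat.gcd (4 ^ p - 1) (seqVal p u) : ℝ) ≤ B) :
    ⌊Real.logb 4 (((4 ^ p - 1 : ℕ) : ℝ) / B + 1)⌋ ≤ adicComplexity4 p u := by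
  have hgcd : (0 : ℝ) < Nat.gcd (4 ^ p - 1) (seqVal p u) :=
    Nat.cast_pos.mpr <| Nat.gcd_pos_of_pos_left _ <|
      Nat.sub_pos_of_lt <| Nat.one_lt_pow hp (by norm_num)
  have hBpos : 0 < B := hgcd.trans_le hB
  refine Int.floor_le_floor (Real.logb_le_logb_of_le (by norm_num) (by positivity) ?_)
  gcongr

variable {R : Type*} [CommRing R] {p : ℕ} [NeZero p]

lemma sum_zmod_val {M : Type*} [AddCommMonoid M] (f : ℕ → M) :
    ∑ t : ZMod p, f t.val = ∑ t ∈ range p, f t :=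
  sum_bij (fun t _ => t.val) (fun t _ => mem_range.mpr t.val_lt)
    (fun _ _ _ _ h => ZMod.val_injective p h)
    (fun n hn => ⟨n, mem_univ _, ZMod.val_cast_of_lt (mem_range.mp hn)⟩) fun _ _ => rfl

lemma sum_zmodChar_eq_zero {ζ : R} (hζ : ζ ^ p = 1) (hunit : IsUnit (ζ - 1)) :
    ∑ t, AddChar.zmodChar p hζ t = 0 := by
  simp only [AddChar.zmodChar_apply, sum_zmod_val (ζ ^ ·)]
  rw [← hunit.mul_left_eq_zero, geom_sum_mul, hζ, sub_self]

lemma charSum_zmodChar_eq_seqVal (h4 : (4 : R) ^ p = 1) (u : ℕ → ℕ) :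
    charSum (AddChar.zmodChar p h4) (fun t => (u t.val : ℤ)) = seqVal p u := by
  simp [charSum, seqVal, AddChar.zmodChar_apply, ← sum_zmod_val]

end AdicComplexity

section SeqU5

variable {p θ : ℕ} [Fact p.Prime] (hp4 : p % 4 = 1)
  (hθ : IsPrimitiveRoot (θ : ZMod p) (p - 1))

include hp4

lemma ringChar_zmod_ne_two : ringChar (ZMod p) ≠ 2 := by
  rw [ZMod.ringChar_zmod_n]
  omega

include hθ

lemma not_three_dvd_seqVal_seqU5 : ¬3 ∣ seqVal p (seqU5 p θ) := by
  have h4 : (4 : ZMod 3) ^ p = 1 := by rw [show (4 : ZMod 3) = 1 by decide, one_pow]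
  have htriv : AddChar.zmodChar p h4 = 1 := by
    ext t
    rw [AddChar.zmodChar_apply, show (4 : ZMod 3) = 1 by decide, one_pow, AddChar.one_apply]
  have h := two_mul_charSum_seqU5 hp4 hθ (AddChar.zmodChar p h4)
  rw [charSum_zmodChar_eq_seqVal, htriv, charSum_one, charSum_one,
    quadraticChar_sum_zero (ringChar_zmod_ne_two hp4),
    (isQuarticSign_quarticSign hp4 hθ).sum_eq_zero (ringChar_zmod_ne_two hp4),
    show (3 : ZMod 3) = 0 by decide] at h
  rw [← ZMod.natCast_eq_zero_iff]
  intro hdvd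
  simp [hdvd] at h

lemma exists_intCast_eliminant_eq_zero {R : Type*} [CommRing R] {ψ : AddChar (ZMod p) R}
    (hψ : ∑ t, ψ t = 0) (hU : charSum ψ (fun t => (seqU5 p θ t.val : ℤ)) = 0) :
    ∃ σ m : ℤ, |σ| ≤ 1 ∧ |m| ≤ p + 1 ∧ (eliminant p σ m : R) = 0 := by
  have hF := ringChar_zmod_ne_two hp4
  have hε := isQuarticSign_quarticSign hp4 hθ
  obtain ⟨i, hi⟩ : IsSquare (-1 : ZMod p) := ZMod.exists_sq_eq_neg_one_iff.mpr (by omega)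
  have hi : i ^ 2 = -1 := by rw [hi, sq]
  have hi0 : i ≠ 0 := by rintro rfl; simp at hi
  have hχ : charSum ψ (quadraticChar (ZMod p)) ^ 2 = p := by
    rw [charSum_quadraticChar_sq hF hψ, ← hi, quadraticChar_sq_one' hi0, ZMod.card]
    simp
  have hlin := two_mul_charSum_seqU5 hp4 hθ ψ
  have hσ : |quadraticChar (ZMod p) i| ≤ 1 := by
    rcases quadraticChar_dichotomy hi0 with h | h <;> simp only [h] <;> norm_num
  refine ⟨quadraticChar (ZMod p) i, addConv (quarticSign p θ) (quarticSign p θ) 1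
    + quadraticChar (ZMod p) i, hσ, ?_, ?_⟩
  · have := abs_addConv_le hε.abs_le_one hε.abs_le_one 1
    rw [ZMod.card] at this
    exact (abs_add_le _ _).trans (add_le_add this hσ)
  · refine intCast_eliminant_eq_zero (s := charSum ψ (quadraticChar (ZMod p)))
      (b := charSum ψ (quarticSign p θ)) (mod_cast hχ) ?_ ?_
    · rw [hε.charSum_sq hF hψ hi, ZMod.card]
      push_cast
      rfl
    · rw [hU, hψ] at hlin
      linear_combination -hlin

lemma gcd_seqVal_seqU5_le :
    Nat.gcd (4 ^ p - 1) (seqVal p (seqU5 p θ)) ≤ (1 + 2 * p) * (1 + 6 * p) * (1 + 8 * p) := by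
  have hp1 : 1 < p := (Fact.out : p.Prime).one_lt
  have hdvd4 := Nat.gcd_dvd_left (4 ^ p - 1) (seqVal p (seqU5 p θ))
  have hdvdU := Nat.gcd_dvd_right (4 ^ p - 1) (seqVal p (seqU5 p θ))
  generalize Nat.gcd (4 ^ p - 1) (seqVal p (seqU5 p θ)) = d at *
  have h4 : (4 : ZMod d) ^ p = 1 := by
    have h := (ZMod.natCast_eq_zero_iff _ _).mpr hdvd4
    rw [Nat.cast_sub (Nat.one_le_pow _ _ (by norm_num))] at h
    exact sub_eq_zero.mp (mod_cast h)
  have hunit : IsUnit (4 - 1 : ZMod d) := by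
    have hcop : Nat.Coprime 3 d := (Nat.Prime.coprime_iff_not_dvd Nat.prime_three).mpr fun h =>
      not_three_dvd_seqVal_seqU5 hp4 hθ (h.trans hdvdU)
    convert (ZMod.isUnit_iff_coprime 3 d).mpr hcop using 1
    norm_num
  have hU : charSum (AddChar.zmodChar p h4) (fun t => (seqU5 p θ t.val : ℤ)) = 0 := by
    rw [charSum_zmodChar_eq_seqVal, (ZMod.natCast_eq_zero_iff _ _).mpr hdvdU]
  obtain ⟨σ, m, hσ, hm, hzero⟩ :=
    exists_intCast_eliminant_eq_zero hp4 hθ (sum_zmodChar_eq_zero h4 hunit) hU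
  have hle : (d : ℤ) ≤ |eliminant p σ m| :=
    Int.le_of_dvd (abs_pos.mpr (eliminant_ne_zero (mod_cast hp1)))
      ((dvd_abs _ _).mpr ((ZMod.intCast_zmod_eq_zero_iff_dvd _ _).mp hzero))
  exact_mod_cast hle.trans (abs_eliminant_le (mod_cast hp1.le) hσ hm)

end SeqU5

theorem theorem3_general
    (p : ℕ) (hp : p.Prime) (hp4 : p % 4 = 1)
    (θ : ℕ) (hθ : IsPrimitiveRoot (θ : ZMod p) (p - 1)) :
    ⌊Real.logb 4 (((4 ^ p - 1 : ℕ) : ℝ) /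
        ((1 + 2 * (p : ℝ)) * (1 + 6 * (p : ℝ)) * (1 + 8 * (p : ℝ))) + 1)⌋ ≤
      adicComplexity4 p (graySeq (seqS1 p θ) (seqCompl (seqS2 p θ))) := by
  have : Fact p.Prime := ⟨hp⟩
  exact floor_logb_le_adicComplexity4 hp.ne_zero (mod_cast gcd_seqVal_seqU5_le hp4 hθ)

theorem theorem3
    (p : ℕ) (hp : p.Prime) (hp8 : p % 8 = 5)
    (x y : ℤ) (hx : x % 4 = 1) (hxy : (p : ℤ) = x ^ 2 + 4 * y ^ 2)
    (θ : ℕ) (hθ : IsPrimitiveRoot (θ : ZMod p) (p - 1))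
    (hy : 16 * (((cycD p θ 0).filter (fun a => (a + 1) % p ∈ cycD p θ 1)).card : ℤ)
        = (p : ℤ) + 1 + 2 * x - 8 * y)
    :
    ⌊Real.logb 4 (((4 ^ p - 1 : ℕ) : ℝ) / (((1 + 2 * (p : ℝ)) * (1 + 6 * (p : ℝ)) * (1 + 8 * (p : ℝ)))) + 1)⌋ ≤
      adicComplexity4 p (graySeq (seqS1 p θ) (seqCompl (seqS2 p θ))) :=
  theorem3_general p hp (by omega) θ hθ
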